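/- Every left 𝕆-module M has a basis S contained in 𝒜(M) ∪ 𝒜⁻(M): there exists a subset S ⊆ 𝒜(M) ∪ 𝒜⁻(M) that is 𝕆-linearly independent and satisfies 𝕆S = M, i.e., every element of M is a finite 𝕆-linear combination of elements of S. -/

import Mathlib

noncomputable section

open scoped Quaternion

/-- The octonions, realized as pairs of quaternions via the Cayley–Dickson construction. -/
def Octo : Type := ℍ[ℝ] × ℍ[ℝ]

namespace Octo

instance : AddCommGroup Octo := inferInstanceAs (AddCommGroup (ℍ[ℝ] × ℍ[ℝ]))
instance : Module ℝ Octo := inferInstanceAs (Module ℝ (ℍ[ℝ] × ℍ[ℝ]))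

/-- Build an octonion from a pair of quaternions. -/
def mk (a b : ℍ[ℝ]) : Octo := (a, b)

/-- First quaternion component. -/
def p1 (x : Octo) : ℍ[ℝ] := (show ℍ[ℝ] × ℍ[ℝ] from x).1

/-- Second quaternion component. -/
def p2 (x : Octo) : ℍ[ℝ] := (show ℍ[ℝ] × ℍ[ℝ] from x).2

/-- Cayley–Dickson multiplication: `(a,b)(c,d) = (ac − d̄b, da + bc̄)`. -/
instance : Mul Octo :=
  ⟨fun x y => mk (p1 x * p1 y - star (p2 y) * p2 x) (p2 y * p1 x + p2 x * star (p1 y))⟩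

instance : One Octo := ⟨mk 1 0⟩

/-- Octonion conjugation: for `x = (a,b)`, `x̄ = (ā, −b)`. -/
def conj (x : Octo) : Octo := mk (star (p1 x)) (-(p2 x))

/-- The octonion associator `[x,y,z] = (xy)z − x(yz)`. -/
def assoc (x y z : Octo) : Octo := x * y * z - x * (y * z)

/-- The octonion commutator `[x,y] = xy − yx`. -/
def comm (x y : Octo) : Octo := x * y - y * x

/-- The canonical embedding of the reals into the octonions. -/
def ofReal (r : ℝ) : Octo := r • (1 : Octo)

end Octo

section OMod

variable {M : Type*} [AddCommGroup M] [Module ℝ M]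
variable {N : Type*} [AddCommGroup N] [Module ℝ N]

/-- `IsOMod sm` says that the scalar multiplication `sm : 𝕆 × M → M` makes the real vector
space `M` a left 𝕆-module: `sm` is ℝ-bilinear, unital, and the left associator is
alternating in its two octonion arguments. -/
structure IsOMod (sm : Octo → M → M) : Prop where
  smul_add : ∀ (p : Octo) (m n : M), sm p (m + n) = sm p m + sm p n
  add_smul : ∀ (p q : Octo) (m : M), sm (p + q) m = sm p m + sm q m
  real_smul : ∀ (r : ℝ) (p : Octo) (m : M), sm (r • p) m = r • sm p m
  smul_real : ∀ (r : ℝ) (p : Octo) (m : M), sm p (r • m) = r • sm p m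
  one_smul : ∀ m : M, sm 1 m = m
  alt : ∀ (p q : Octo) (m : M),
    sm (p * q) m - sm p (sm q m) = -(sm (q * p) m - sm q (sm p m))

/-- The left associator `[p,q,m] = (pq)m − p(qm)`. -/
def oLassoc (sm : Octo → M → M) (p q : Octo) (m : M) : M :=
  sm (p * q) m - sm p (sm q m)

/-- The set `𝒜(M)` of associative elements: `[p,q,m] = 0` for all `p,q ∈ 𝕆`. -/
def assocSet (sm : Octo → M → M) : Set M :=
  {m | ∀ p q : Octo, oLassoc sm p q m = 0}

/-- The set `𝒜⁻(M)` of conjugate associative elements: `(pq)m = q(pm)` for all `p,q ∈ 𝕆`. -/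
def conjAssocSet (sm : Octo → M → M) : Set M :=
  {m | ∀ p q : Octo, sm (p * q) m = sm q (sm p m)}

/-- A homomorphism of left 𝕆-modules: an ℝ-linear map commuting with 𝕆-scalar
multiplication. -/
def IsOHom (sm : Octo → M → M) (sm' : Octo → N → N) (f : M → N) : Prop :=
  IsLinearMap ℝ f ∧ ∀ (p : Octo) (m : M), f (sm p m) = sm' p (f m)

/-- Two left 𝕆-modules are isomorphic if there is a bijective homomorphism between them. -/
def OIso (sm : Octo → M → M) (sm' : Octo → N → N) : Prop :=
  ∃ f : M → N, IsOHom sm sm' f ∧ Function.Bijective f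

/-- A submodule: a real subspace closed under 𝕆-scalar multiplication. -/
structure IsOSubmodule (sm : Octo → M → M) (S : Set M) : Prop where
  zero_mem : (0 : M) ∈ S
  add_mem : ∀ {x y : M}, x ∈ S → y ∈ S → x + y ∈ S
  smul_mem : ∀ (r : ℝ) {x : M}, x ∈ S → r • x ∈ S
  osmul_mem : ∀ (p : Octo) {x : M}, x ∈ S → sm p x ∈ S

/-- `⟨m⟩_𝕆`, the smallest submodule containing `m`, as a set. -/
def genSet (sm : Octo → M → M) (m : M) : Set M :=
  ⋂₀ {S : Set M | IsOSubmodule sm S ∧ m ∈ S}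

/-- An element `m` is cyclic if `⟨m⟩_𝕆 = 𝕆m`. -/
def IsOCyclic (sm : Octo → M → M) (m : M) : Prop :=
  genSet sm m = {x | ∃ p : Octo, x = sm p m}

/-- 𝕆-linear independence of a subset `S ⊆ M`: any finite 𝕆-linear combination of
distinct elements of `S` that vanishes has all coefficients zero. -/
def OLinIndep (sm : Octo → M → M) (S : Set M) : Prop :=
  ∀ (n : ℕ) (s : Fin n → M) (r : Fin n → Octo), Function.Injective s → (∀ i, s i ∈ S) →
    (∑ i, sm (r i) (s i)) = 0 → ∀ i, r i = 0

end OMod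

/-- The canonical left 𝕆-module structure on 𝕆 itself. -/
def oSmul : Octo → Octo → Octo := fun p x => p * x

/-- The left 𝕆-module structure `𝕆̄` on 𝕆: `p ·̂ x = p̄x`. -/
def oBarSmul : Octo → Octo → Octo := fun p x => Octo.conj p * x

/-!
Let `e_x` run over the eight basis octonions. Left multiplications by the seven imaginary ones
square to `-1` and anticommute, so an 𝕆-module is a Clifford module over `ℝ`. For a line
`(a, b, c)` of the Fano plane, `-e_c e_a e_b` acts as an involution, and two such involutions
commute because distinct lines meet in exactly one point. Hence four lines split `M` into the
direct sum of the sixteen joint eigenspaces, one for each choice of four signs. Each `e_x`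
permutes these eigenspaces, and the four lines are chosen so that every sign pattern is `η = ±1`
times that of exactly one `e_x`. Thus `M` is the direct sum of the spaces `e_x A(η)`, where `A(η)`
is the eigenspace on which all four involutions equal `η`, and real bases of `A(1)` and `A(-1)`
together form an 𝕆-basis of `M`.

An element `m` of `A(1)` satisfies `e_c m = e_a (e_b m)` on the four lines. Together with the
Clifford relations, this determines the multiplications on it as in the Cayley–Dickson formula, so
`A(1) ⊆ 𝒜(M)`. Letting `p` act as `p̄` flips the sign of each involution and exchanges `𝒜` with
`𝒜⁻`, hence `A(-1) ⊆ 𝒜⁻(M)`.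
-/

section SignCommute

variable {R : Type*} [Ring R] {a b c x : R}

theorem mul_eq_units_smul_symm {ε : ℤˣ} (ha : x * a = ε • (a * x)) : a * x = ε • (x * a) := by
  rw [ha, smul_smul, Int.units_mul_self, one_smul]

theorem mul_mul_eq_units_smul {ε δ : ℤˣ} (ha : x * a = ε • (a * x)) (hb : x * b = δ • (b * x)) :
    x * (a * b) = (ε * δ) • (a * b * x) := by
  rw [← mul_assoc, ha, smul_mul_assoc, mul_assoc, hb, mul_smul_comm, mul_assoc, smul_smul]

theorem mul_mul_mul_self_eq_one (ha : a * a = -1) (hb : b * b = -1) (hc : c * c = -1)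
    (hab : a * b = -(b * a)) (hac : a * c = -(c * a)) (hbc : b * c = -(c * b)) :
    c * a * b * (c * a * b) = 1 := by
  calc c * a * b * (c * a * b) = c * a * (b * c) * a * b := by noncomm_ring
    _ = -(c * (a * c) * (b * a) * b) := by rw [hbc]; noncomm_ring
    _ = -(c * c * a * (a * b) * b) := by rw [hac, hab]; noncomm_ring
    _ = -((c * c) * (a * a) * (b * b)) := by noncomm_ring
    _ = 1 := by rw [ha, hb, hc]; noncomm_ring

end SignCommute

section CommutingInvolutions

variable {K V ι : Type*} [Field K] [AddCommGroup V] [Module K V] {f : ι → Module.End K V}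

/-- The joint eigenspace of the family of operators `f` for the eigenvalues `χ i = ±1`. -/
def signEigenspace (f : ι → Module.End K V) (χ : ι → ℤˣ) : Submodule K V :=
  ⨅ i, (f i).eigenspace ((χ i : ℤ) : K)

theorem mem_signEigenspace {χ : ι → ℤˣ} {v : V} :
    v ∈ signEigenspace f χ ↔ ∀ i, f i v = χ i • v := by
  simp only [signEigenspace, Submodule.mem_iInf, Module.End.mem_eigenspace_iff,
    Int.cast_smul_eq_zsmul, Units.smul_def]

theorem iSupIndep_signEigenspace [NeZero (2 : K)] (hcomm : ∀ i j, Commute (f i) (f j)) :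
    iSupIndep (signEigenspace f) := by
  have hcast : Function.Injective fun ε : ℤˣ => ((ε : ℤ) : K) := by
    intro ε δ h
    obtain rfl | rfl := Int.units_eq_one_or ε <;> obtain rfl | rfl := Int.units_eq_one_or δ <;>
      simp_all [eq_neg_iff_add_eq_zero, neg_eq_iff_add_eq_zero, one_add_one_eq_two]
  exact ((Module.End.independent_iInf_maxGenEigenspace_of_forall_mapsTo f fun i j =>
    Module.End.mapsTo_maxGenEigenspace_of_comm (hcomm j i)).comp hcast.comp_left).mono
    fun _ => iInf_mono fun _ => Module.End.eigenspace_le_maxGenEigenspace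

theorem apply_add_units_smul {g : Module.End K V} (hg : g * g = 1) (ε : ℤˣ) (v : V) :
    g (v + ε • g v) = ε • (v + ε • g v) := by
  have hv : g (g v) = v := by rw [← Module.End.mul_apply, hg, Module.End.one_apply]
  obtain rfl | rfl := Int.units_eq_one_or ε <;> simp [hv, add_comm]

theorem mem_span_sign_eigenvectors [NeZero (2 : K)] (hcomm : ∀ i j, Commute (f i) (f j))
    (hsq : ∀ i, f i * f i = 1) (s : Finset ι) (v : V) :
    v ∈ Submodule.span K {w | ∀ i ∈ s, ∃ ε : ℤˣ, f i w = ε • w} := by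
  classical
  induction s using Finset.induction_on with
  | empty => exact Submodule.subset_span (by simp)
  | insert j s _ ih =>
    refine Submodule.span_le.2 (fun w hw => ?_) ih
    have hmem (δ : ℤˣ) : w + δ • f j w ∈
        {w | ∀ i ∈ insert j s, ∃ ε : ℤˣ, f i w = ε • w} := by
      refine Finset.forall_mem_insert _ _ _ |>.2 ⟨⟨δ, apply_add_units_smul (hsq j) δ w⟩, ?_⟩
      intro i hi
      obtain ⟨ε, hε⟩ := hw i hi
      refine ⟨ε, ?_⟩
      have hij : f i (f j w) = f j (f i w) := LinearMap.congr_fun (hcomm i j).eq w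
      simp only [map_add, Units.smul_def, map_zsmul, smul_add, hij] at hε ⊢
      rw [hε, map_zsmul, smul_comm]
    have hhalf : w = (2⁻¹ : K) • ((w + (1 : ℤˣ) • f j w) + (w + (-1 : ℤˣ) • f j w)) := by
      rw [Units.neg_smul, one_smul, add_add_add_comm, add_neg_cancel, add_zero, ← two_smul K w,
        inv_smul_smul₀ two_ne_zero]
    rw [hhalf]
    exact Submodule.smul_mem _ _
      (add_mem (Submodule.subset_span (hmem 1)) (Submodule.subset_span (hmem (-1))))

theorem iSup_signEigenspace_eq_top [Finite ι] [NeZero (2 : K)]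
    (hcomm : ∀ i j, Commute (f i) (f j)) (hsq : ∀ i, f i * f i = 1) :
    ⨆ χ, signEigenspace f χ = ⊤ := by
  have := Fintype.ofFinite ι
  refine eq_top_iff.2 fun v _ => Submodule.span_le.2 (fun w hw => ?_)
    (mem_span_sign_eigenvectors hcomm hsq Finset.univ v)
  choose! χ hχ using hw
  exact Submodule.mem_iSup_of_mem χ (mem_signEigenspace.2 fun i => hχ i (Finset.mem_univ i))

end CommutingInvolutions

namespace Octo

@[ext]
theorem ext {x y : Octo} (h₁ : p1 x = p1 y) (h₂ : p2 x = p2 y) : x = y :=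
  Prod.ext h₁ h₂

@[simp] theorem p1_mk (a b : ℍ[ℝ]) : p1 (mk a b) = a := rfl
@[simp] theorem p2_mk (a b : ℍ[ℝ]) : p2 (mk a b) = b := rfl
@[simp] theorem p1_add (x y : Octo) : p1 (x + y) = p1 x + p1 y := rfl
@[simp] theorem p2_add (x y : Octo) : p2 (x + y) = p2 x + p2 y := rfl
@[simp] theorem p1_neg (x : Octo) : p1 (-x) = -p1 x := rfl
@[simp] theorem p2_neg (x : Octo) : p2 (-x) = -p2 x := rfl
@[simp] theorem p1_sub (x y : Octo) : p1 (x - y) = p1 x - p1 y := rfl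
@[simp] theorem p2_sub (x y : Octo) : p2 (x - y) = p2 x - p2 y := rfl
@[simp] theorem p1_smul (r : ℝ) (x : Octo) : p1 (r • x) = r • p1 x := rfl
@[simp] theorem p2_smul (r : ℝ) (x : Octo) : p2 (r • x) = r • p2 x := rfl
@[simp] theorem p1_one : p1 1 = 1 := rfl
@[simp] theorem p2_one : p2 1 = 0 := rfl
@[simp] theorem p1_conj (x : Octo) : p1 (conj x) = star (p1 x) := rfl
@[simp] theorem p2_conj (x : Octo) : p2 (conj x) = -p2 x := rfl

@[simp]
theorem p1_mul (x y : Octo) : p1 (x * y) = p1 x * p1 y - star (p2 y) * p2 x := rfl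

@[simp]
theorem p2_mul (x y : Octo) : p2 (x * y) = p2 y * p1 x + p2 x * star (p1 y) := rfl

theorem conj_conj (x : Octo) : conj (conj x) = x := by
  ext1 <;> simp

theorem conj_add (x y : Octo) : conj (x + y) = conj x + conj y := by
  ext1 <;> simp [add_comm]

theorem conj_smul (r : ℝ) (x : Octo) : conj (r • x) = r • conj x := by
  ext1 <;> simp

theorem conj_one : conj 1 = 1 := by
  ext1 <;> simp

theorem conj_mul (x y : Octo) : conj (x * y) = conj y * conj x := by
  ext1 <;> simp

/-- The standard real basis `1, i, j, k` (`Sum.inl`) and `ℓ, iℓ, jℓ, kℓ` (`Sum.inr`) of the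
octonions. -/
def basis : Module.Basis (Fin 4 ⊕ Fin 4) ℝ Octo :=
  (QuaternionAlgebra.basisOneIJK (-1 : ℝ) 0 (-1)).prod (QuaternionAlgebra.basisOneIJK (-1) 0 (-1))

theorem basis_repr_inl (x : Octo) (i : Fin 4) :
    basis.repr x (.inl i) = ![(p1 x).re, (p1 x).imI, (p1 x).imJ, (p1 x).imK] i := rfl

theorem basis_repr_inr (x : Octo) (i : Fin 4) :
    basis.repr x (.inr i) = ![(p2 x).re, (p2 x).imI, (p2 x).imJ, (p2 x).imK] i := rfl

@[simp]
theorem re_p1_basis (x : Fin 4 ⊕ Fin 4) : (p1 (basis x)).re = if x = .inl 0 then 1 else 0 :=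
  basis.repr_self_apply x (.inl 0)

@[simp]
theorem imI_p1_basis (x : Fin 4 ⊕ Fin 4) : (p1 (basis x)).imI = if x = .inl 1 then 1 else 0 :=
  basis.repr_self_apply x (.inl 1)

@[simp]
theorem imJ_p1_basis (x : Fin 4 ⊕ Fin 4) : (p1 (basis x)).imJ = if x = .inl 2 then 1 else 0 :=
  basis.repr_self_apply x (.inl 2)

@[simp]
theorem imK_p1_basis (x : Fin 4 ⊕ Fin 4) : (p1 (basis x)).imK = if x = .inl 3 then 1 else 0 :=
  basis.repr_self_apply x (.inl 3)

@[simp]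
theorem re_p2_basis (x : Fin 4 ⊕ Fin 4) : (p2 (basis x)).re = if x = .inr 0 then 1 else 0 :=
  basis.repr_self_apply x (.inr 0)

@[simp]
theorem imI_p2_basis (x : Fin 4 ⊕ Fin 4) : (p2 (basis x)).imI = if x = .inr 1 then 1 else 0 :=
  basis.repr_self_apply x (.inr 1)

@[simp]
theorem imJ_p2_basis (x : Fin 4 ⊕ Fin 4) : (p2 (basis x)).imJ = if x = .inr 2 then 1 else 0 :=
  basis.repr_self_apply x (.inr 2)

@[simp]
theorem imK_p2_basis (x : Fin 4 ⊕ Fin 4) : (p2 (basis x)).imK = if x = .inr 3 then 1 else 0 :=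
  basis.repr_self_apply x (.inr 3)

theorem basis_inl_zero : basis (.inl 0) = 1 := by
  ext <;> simp

theorem mul_add_mul_swap (x y : Octo) :
    x * y + y * x = (2 * (p1 x).re) • y + (2 * (p1 y).re) • x -
      (2 * ∑ i, basis.repr x i * basis.repr y i) • (1 : Octo) := by
  ext <;>
    simp [Fintype.sum_sum_type, Fin.sum_univ_four, basis_repr_inl, basis_repr_inr] <;> ring

theorem conj_basis {x : Fin 4 ⊕ Fin 4} (hx : x ≠ .inl 0) : conj (basis x) = -basis x := by
  ext <;> simp [hx]

theorem basis_mul_add_basis_mul {x y : Fin 4 ⊕ Fin 4} (hx : x ≠ .inl 0) (hy : y ≠ .inl 0) :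
    basis x * basis y + basis y * basis x = (if x = y then -2 else 0 : ℝ) • (1 : Octo) := by
  have hinner : ∑ i, basis.repr (basis x) i * basis.repr (basis y) i = if x = y then 1 else 0 := by
    simp [Finsupp.single_apply]
  rw [mul_add_mul_swap, re_p1_basis, re_p1_basis, if_neg hx, if_neg hy, hinner]
  split_ifs <;> simp

theorem conj_add_self (x : Octo) : conj x + x = (2 * (p1 x).re) • 1 := by
  ext <;> simp; ring

theorem mul_conj_add_mul (x y : Octo) : y * conj x + y * x = (2 * (p1 x).re) • y := by
  ext <;> simp <;> ring

theorem mk_zero_right_eq (p : ℍ[ℝ]) :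
    mk p 0 = p.re • 1 + p.imI • basis (.inl 1) + p.imJ • basis (.inl 2) +
      p.imK • basis (.inl 3) := by
  ext <;> simp

theorem mk_zero_left_eq (p : ℍ[ℝ]) :
    mk 0 p = p.re • basis (.inr 0) + p.imI • basis (.inr 1) + p.imJ • basis (.inr 2) +
      p.imK • basis (.inr 3) := by
  ext <;> simp

theorem basis_inr_zero : basis (.inr 0) = mk 0 1 := by
  ext <;> simp

theorem mk_p1_zero_add_mk_zero_p2 (x : Octo) : mk (p1 x) 0 + mk 0 (p2 x) = x := by
  ext1 <;> simp

end Octo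

/-- The sign `ε` for which the operators of multiplication by the basis octonions `e_x` and `e_y`
on a left 𝕆-module satisfy `e_x e_y = ε e_y e_x`. -/
def commSign (x y : Fin 4 ⊕ Fin 4) : ℤˣ :=
  if x = y ∨ x = .inl 0 ∨ y = .inl 0 then 1 else -1

/-- Four triples `(a, b, c)` of basis octonions with `e_a e_b = e_c`, that is, four lines of the
Fano plane: the line `(i, j, k)` and the three lines through `ℓ`. -/
def line : Fin 4 → Fin 3 → Fin 4 ⊕ Fin 4 :=
  ![![.inl 1, .inl 2, .inl 3], ![.inl 1, .inr 0, .inr 1], ![.inl 2, .inr 0, .inr 2],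
    ![.inl 3, .inr 0, .inr 3]]

/-- The sign with which multiplication by `e_x` commutes with the involution of the line `n`. -/
def lineSign (x : Fin 4 ⊕ Fin 4) (n : Fin 4) : ℤˣ :=
  ∏ k, commSign x (line n k)

theorem line_ne_inl_zero (n : Fin 4) (k : Fin 3) : line n k ≠ .inl 0 := by
  revert n k; decide

theorem line_injective (n : Fin 4) : Function.Injective (line n) := by
  revert n; decide

theorem prod_lineSign_line (m n : Fin 4) : ∏ k, lineSign (line n k) m = 1 := by
  revert m n; decide

theorem bijective_mul_lineSign :
    Function.Bijective fun p : ℤˣ × (Fin 4 ⊕ Fin 4) => fun n => p.1 * lineSign p.2 n := by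
  decide

theorem mem_conjAssocSet_of_mem_assocSet_conj {M : Type*} [AddCommGroup M]
    {sm : Octo → M → M} {a : M} (ha : a ∈ assocSet fun p m => sm (Octo.conj p) m) :
    a ∈ conjAssocSet sm := fun p q => by
  have h := sub_eq_zero.1 (ha (Octo.conj q) (Octo.conj p))
  simpa only [Octo.conj_mul, Octo.conj_conj] using h

namespace IsOMod

variable {M : Type*} [AddCommGroup M] [Module ℝ M] {sm : Octo → M → M} (h : IsOMod sm)
include h

theorem conj : IsOMod fun p m => sm (Octo.conj p) m where
  smul_add p m n := h.smul_add _ m n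
  add_smul p q m := by rw [Octo.conj_add, h.add_smul]
  real_smul r p m := by rw [Octo.conj_smul, h.real_smul]
  smul_real r p m := h.smul_real r _ m
  one_smul m := by rw [Octo.conj_one, h.one_smul]
  alt p q m := by
    have halt := h.alt (Octo.conj p) (Octo.conj q) m
    simp only [Octo.conj_mul]
    linear_combination (norm := module) halt

/-- Multiplication on a left 𝕆-module as an ℝ-linear map into the endomorphisms. -/
def lmul : Octo →ₗ[ℝ] Module.End ℝ M :=
  LinearMap.mk₂ ℝ sm h.add_smul h.real_smul h.smul_add h.smul_real

@[simp]
theorem lmul_apply (p : Octo) (m : M) : h.lmul p m = sm p m := rfl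

theorem lmul_one : h.lmul 1 = 1 :=
  LinearMap.ext h.one_smul

theorem lmul_mul_lmul_add (p q : Octo) :
    h.lmul p * h.lmul q + h.lmul q * h.lmul p = h.lmul (p * q + q * p) := by
  ext m
  have halt : sm (p * q) m - sm p (sm q m) + (sm (q * p) m - sm q (sm p m)) = 0 :=
    add_eq_zero_iff_eq_neg.2 (h.alt p q m)
  simp only [LinearMap.add_apply, Module.End.mul_apply, lmul_apply, h.add_smul]
  rw [← sub_eq_zero, ← neg_eq_zero, ← halt]
  abel

/-- The operator of multiplication by the basis octonion `e_x`. -/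
def basisMul (x : Fin 4 ⊕ Fin 4) : Module.End ℝ M :=
  h.lmul (Octo.basis x)

theorem basisMul_inl_zero : h.basisMul (.inl 0) = 1 := by
  rw [basisMul, Octo.basis_inl_zero, lmul_one]

theorem basisMul_mul_basisMul_add {x y : Fin 4 ⊕ Fin 4} (hx : x ≠ .inl 0) (hy : y ≠ .inl 0) :
    h.basisMul x * h.basisMul y + h.basisMul y * h.basisMul x =
      (if x = y then -2 else 0 : ℝ) • (1 : Module.End ℝ M) := by
  rw [basisMul, basisMul, lmul_mul_lmul_add, Octo.basis_mul_add_basis_mul hx hy, map_smul, lmul_one]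

theorem basisMul_mul_self {x : Fin 4 ⊕ Fin 4} (hx : x ≠ .inl 0) :
    h.basisMul x * h.basisMul x = -1 := by
  have hsq := h.basisMul_mul_basisMul_add hx hx
  rw [if_pos rfl, ← two_smul ℝ, neg_smul, ← smul_neg] at hsq
  exact smul_right_injective _ two_ne_zero hsq

theorem basisMul_mul_basisMul (x y : Fin 4 ⊕ Fin 4) :
    h.basisMul x * h.basisMul y = commSign x y • (h.basisMul y * h.basisMul x) := by
  unfold commSign
  split_ifs with hxy
  · obtain rfl | rfl | rfl := hxy <;> simp [basisMul_inl_zero]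
  · push Not at hxy
    rw [Units.neg_smul, _root_.one_smul, eq_neg_iff_add_eq_zero,
      h.basisMul_mul_basisMul_add hxy.2.1 hxy.2.2, if_neg hxy.1, zero_smul]

theorem exists_units_smul_eq_basisMul_basisMul (x : Fin 4 ⊕ Fin 4) :
    ∃ ε : ℤˣ, ∀ m, h.basisMul x (h.basisMul x m) = ε • m := by
  by_cases hx : x = .inl 0
  · exact ⟨1, fun m => by simp [hx, basisMul_inl_zero]⟩
  · refine ⟨-1, fun m => ?_⟩
    rw [← Module.End.mul_apply, h.basisMul_mul_self hx, Units.neg_smul, _root_.one_smul,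
      LinearMap.neg_apply, Module.End.one_apply]

theorem basisMul_injective (x : Fin 4 ⊕ Fin 4) : Function.Injective (h.basisMul x) := by
  obtain ⟨ε, hε⟩ := h.exists_units_smul_eq_basisMul_basisMul x
  exact fun m m' hm => smul_left_cancel ε (by rw [← hε, ← hε, hm])

/-- The involution attached to a line `(a, b, c)` of the Fano plane, up to a sign the product of
the multiplications by `e_c`, `e_a` and `e_b`. It fixes `m` if and only if
`e_c m = e_a (e_b m)`. -/
def lineInv (n : Fin 4) : Module.End ℝ M :=
  -(h.basisMul (line n 2) * h.basisMul (line n 0) * h.basisMul (line n 1))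

theorem basisMul_line_mul_basisMul_line {n : Fin 4} {k l : Fin 3} (hkl : k ≠ l) :
    h.basisMul (line n k) * h.basisMul (line n l) =
      -(h.basisMul (line n l) * h.basisMul (line n k)) := by
  have hsign : commSign (line n k) (line n l) = -1 :=
    if_neg (by simp [line_ne_inl_zero, (line_injective n).eq_iff, hkl])
  rw [basisMul_mul_basisMul, hsign, Units.neg_smul, _root_.one_smul]

theorem lineInv_mul_self (n : Fin 4) : h.lineInv n * h.lineInv n = 1 := by
  rw [lineInv, neg_mul_neg]
  apply mul_mul_mul_self_eq_one <;>
    first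
    | exact h.basisMul_mul_self (line_ne_inl_zero n _)
    | exact h.basisMul_line_mul_basisMul_line (by decide)

theorem mul_lineInv_eq_units_smul {ε : Fin 3 → ℤˣ} {n : Fin 4} {f : Module.End ℝ M}
    (hf : ∀ k, f * h.basisMul (line n k) = ε k • (h.basisMul (line n k) * f)) :
    f * h.lineInv n = (∏ k, ε k) • (h.lineInv n * f) := by
  have hmul := mul_mul_eq_units_smul (mul_mul_eq_units_smul (hf 2) (hf 0)) (hf 1)
  have hprod : ∏ k, ε k = ε 2 * ε 0 * ε 1 := by
    rw [Fin.prod_univ_three, mul_comm, mul_assoc]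
  rw [lineInv, mul_neg, hmul, hprod, neg_mul, smul_neg]

theorem lineInv_mul_basisMul (n : Fin 4) (x : Fin 4 ⊕ Fin 4) :
    h.lineInv n * h.basisMul x = lineSign x n • (h.basisMul x * h.lineInv n) :=
  mul_eq_units_smul_symm (h.mul_lineInv_eq_units_smul fun _ => h.basisMul_mul_basisMul x _)

theorem commute_lineInv (m n : Fin 4) : Commute (h.lineInv m) (h.lineInv n) := by
  have hmul := h.mul_lineInv_eq_units_smul fun k => h.lineInv_mul_basisMul m (line n k)
  rwa [prod_lineSign_line, _root_.one_smul] at hmul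

theorem basisMul_mul_lineInv (n : Fin 4) :
    h.basisMul (line n 2) * h.lineInv n = h.basisMul (line n 0) * h.basisMul (line n 1) := by
  rw [lineInv, mul_neg, ← mul_assoc, ← mul_assoc, h.basisMul_mul_self (line_ne_inl_zero n 2),
    neg_one_mul, neg_mul, neg_neg]

theorem lineInv_apply_eq_self_iff {n : Fin 4} {m : M} :
    h.lineInv n m = m ↔
      h.basisMul (line n 2) m = h.basisMul (line n 0) (h.basisMul (line n 1) m) := by
  rw [← (h.basisMul_injective (line n 2)).eq_iff, ← Module.End.mul_apply, basisMul_mul_lineInv]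
  exact eq_comm

theorem lineInv_conj (n : Fin 4) : h.conj.lineInv n = -h.lineInv n := by
  have hconj (k : Fin 3) : h.conj.basisMul (line n k) = -h.basisMul (line n k) := by
    rw [basisMul, basisMul, ← map_neg, ← Octo.conj_basis (line_ne_inl_zero n k)]
    rfl
  simp only [lineInv, hconj, mul_neg, neg_mul, neg_neg]

theorem smul_eq_sum_basisMul (p : Octo) (m : M) :
    sm p m = ∑ x, Octo.basis.repr p x • h.basisMul x m := by
  have hp : h.lmul p = ∑ x, Octo.basis.repr p x • h.basisMul x := by
    conv_lhs => rw [← Octo.basis.sum_repr p, map_sum]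
    simp only [map_smul, basisMul]
  rw [← lmul_apply h, hp, LinearMap.sum_apply]
  rfl

theorem oLinIndep_range {κ : Type*} {v : κ → M}
    (hv : LinearIndependent ℝ fun p : (Fin 4 ⊕ Fin 4) × κ => h.basisMul p.1 (v p.2)) :
    OLinIndep sm (Set.range v) := by
  intro n s r hs hsv hsum
  choose k hk using hsv
  have hkinj : Function.Injective k := fun i j hij => hs (by rw [← hk, ← hk, hij])
  have hcomp := hv.comp (Prod.map id k) (Function.injective_id.prodMap hkinj)
  have hzero := Fintype.linearIndependent_iff.1 hcomp (fun p => Octo.basis.repr (r p.2) p.1) <| by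
    rw [Fintype.sum_prod_type_right, ← hsum]
    simp only [h.smul_eq_sum_basisMul, ← hk, Function.comp_apply, Prod.map, id]
  exact fun i => Octo.basis.repr.map_eq_zero_iff.1 (Finsupp.ext fun x => hzero (x, i))

theorem exists_eq_sum_of_span_eq_top {κ : Type*} {v : κ → M}
    (hv : Submodule.span ℝ (Set.range fun p : (Fin 4 ⊕ Fin 4) × κ => h.basisMul p.1 (v p.2)) = ⊤)
    (m : M) :
    ∃ (n : ℕ) (s : Fin n → M) (r : Fin n → Octo),
      (∀ i, s i ∈ Set.range v) ∧ m = ∑ i, sm (r i) (s i) := by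
  obtain ⟨n, c, g, rfl⟩ := Submodule.mem_span_set'.1 (hv ▸ Submodule.mem_top : m ∈ _)
  choose p hp using fun i => (g i).2
  refine ⟨n, fun i => v (p i).2, fun i => c i • Octo.basis (p i).1, fun i => ⟨_, rfl⟩, ?_⟩
  simp only [← hp, h.real_smul]
  rfl

/-- The elements on which every line involution acts as the sign `η`. -/
def lineEigenspace (η : ℤˣ) : Submodule ℝ M :=
  signEigenspace h.lineInv fun _ => η

theorem basisMul_mem_signEigenspace {χ : Fin 4 → ℤˣ} {m : M} (hm : m ∈ signEigenspace h.lineInv χ)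
    (x : Fin 4 ⊕ Fin 4) :
    h.basisMul x m ∈ signEigenspace h.lineInv fun n => χ n * lineSign x n := by
  refine mem_signEigenspace.2 fun n => ?_
  have hcomm := LinearMap.congr_fun (h.lineInv_mul_basisMul n x) m
  rw [Module.End.mul_apply] at hcomm
  rw [hcomm, LinearMap.smul_apply, Module.End.mul_apply, mem_signEigenspace.1 hm n,
    Units.smul_def (χ n), map_zsmul, ← Units.smul_def, smul_smul, mul_comm]

theorem map_basisMul_lineEigenspace (p : ℤˣ × (Fin 4 ⊕ Fin 4)) :
    (h.lineEigenspace p.1).map (h.basisMul p.2) =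
      signEigenspace h.lineInv fun n => p.1 * lineSign p.2 n := by
  refine le_antisymm (Submodule.map_le_iff_le_comap.2 fun m hm =>
    h.basisMul_mem_signEigenspace hm p.2) fun m hm => ?_
  obtain ⟨ε, hε⟩ := h.exists_units_smul_eq_basisMul_basisMul p.2
  refine ⟨(ε : ℤ) • h.basisMul p.2 m, Submodule.smul_of_tower_mem _ _ ?_, ?_⟩
  · have hmem := h.basisMul_mem_signEigenspace hm p.2
    simp only [mul_assoc, Int.units_mul_self, mul_one] at hmem
    exact hmem
  · rw [map_zsmul, hε, ← Units.smul_def, smul_smul, Int.units_mul_self, _root_.one_smul]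

theorem isInternal_map_basisMul_lineEigenspace :
    DirectSum.IsInternal fun p : ℤˣ × (Fin 4 ⊕ Fin 4) =>
      (h.lineEigenspace p.1).map (h.basisMul p.2) := by
  simp only [map_basisMul_lineEigenspace]
  refine DirectSum.isInternal_submodule_of_iSupIndep_of_iSup_eq_top
    ((iSupIndep_signEigenspace h.commute_lineInv).comp bijective_mul_lineSign.injective) ?_
  exact (bijective_mul_lineSign.surjective.iSup_comp _).trans
    (iSup_signEigenspace_eq_top h.commute_lineInv h.lineInv_mul_self)

/-- Real bases of the two eigenspaces `h.lineEigenspace (±1)`, as one family of vectors of `M`. -/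
def eigenvectors (k : Σ η, Module.Basis.ofVectorSpaceIndex ℝ (h.lineEigenspace η)) : M :=
  Module.Basis.ofVectorSpace ℝ (h.lineEigenspace k.1) k.2

/-- The real basis of `M` consisting of the products `e_x s`, where `s` runs over
`h.eigenvectors`. -/
def eigenbasis : Module.Basis ((Fin 4 ⊕ Fin 4) ×
    Σ η, Module.Basis.ofVectorSpaceIndex ℝ (h.lineEigenspace η)) ℝ M :=
  (h.isInternal_map_basisMul_lineEigenspace.collectedBasis fun p =>
    (Module.Basis.ofVectorSpace ℝ (h.lineEigenspace p.1)).map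
      (Submodule.equivMapOfInjective _ (h.basisMul_injective p.2) _)).reindex
    { toFun q := (q.1.2, ⟨q.1.1, q.2⟩)
      invFun q := ⟨(q.2.1, q.1), q.2.2⟩ }

theorem coe_eigenbasis :
    ⇑h.eigenbasis = fun p => h.basisMul p.1 (h.eigenvectors p.2) := by
  ext p
  simp [eigenbasis, eigenvectors]

theorem smul_smul_of_mul_eq_mul_conj {p q : Octo} (hpq : p * q = q * Octo.conj p) (m : M) :
    sm p (sm q m) = sm q (sm (Octo.conj p) m) := by
  have hconj : sm (Octo.conj p) m = (2 * (Octo.p1 p).re) • m - sm p m := by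
    rw [eq_sub_iff_add_eq, ← h.add_smul, Octo.conj_add_self, h.real_smul, h.one_smul]
  have hswap := LinearMap.congr_fun (h.lmul_mul_lmul_add p q) m
  rw [hpq, Octo.mul_conj_add_mul, map_smul] at hswap
  calc sm p (sm q m) = (2 * (Octo.p1 p).re) • sm q m - sm q (sm p m) := eq_sub_of_add_eq hswap
    _ = h.lmul q ((2 * (Octo.p1 p).re) • m - sm p m) := by
      rw [map_sub, map_smul, lmul_apply, lmul_apply]
    _ = sm q (sm (Octo.conj p) m) := by rw [hconj, lmul_apply]

theorem lmul_mk_zero_right (p : ℍ[ℝ]) :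
    h.lmul (.mk p 0) = p.re • 1 + p.imI • h.basisMul (.inl 1) + p.imJ • h.basisMul (.inl 2) +
      p.imK • h.basisMul (.inl 3) := by
  simp only [Octo.mk_zero_right_eq, map_add, map_smul, lmul_one, basisMul]

theorem lmul_mk_zero_left (p : ℍ[ℝ]) :
    h.lmul (.mk 0 p) = p.re • h.basisMul (.inr 0) + p.imI • h.basisMul (.inr 1) +
      p.imJ • h.basisMul (.inr 2) + p.imK • h.basisMul (.inr 3) := by
  simp only [Octo.mk_zero_left_eq, map_add, map_smul, basisMul]

theorem smul_mk_smul_mk_zero_right {a : M}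
    (ha : h.basisMul (.inl 3) a = h.basisMul (.inl 1) (h.basisMul (.inl 2) a)) (p q : ℍ[ℝ]) :
    sm (.mk p 0) (sm (.mk q 0) a) = sm (.mk (p * q) 0) a := by
  have hsq (k : Fin 3) (m : M) :
      h.basisMul (line 0 k) (h.basisMul (line 0 k) m) = -m :=
    LinearMap.congr_fun (h.basisMul_mul_self (line_ne_inl_zero 0 k)) m
  have hanti {k l : Fin 3} (hkl : k ≠ l) (m : M) :
      h.basisMul (line 0 k) (h.basisMul (line 0 l) m) =
        -h.basisMul (line 0 l) (h.basisMul (line 0 k) m) :=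
    LinearMap.congr_fun (h.basisMul_line_mul_basisMul_line hkl) m
  have hii := hsq 0
  have hjj := hsq 1
  have hji := hanti (k := 1) (l := 0) (by decide)
  have hki := hanti (k := 2) (l := 0) (by decide)
  have hkj := hanti (k := 2) (l := 1) (by decide)
  simp only [line, Matrix.cons_val] at hii hjj hji hki hkj
  simp only [← h.lmul_apply, lmul_mk_zero_right, LinearMap.add_apply, LinearMap.smul_apply,
    Module.End.one_apply, map_add, map_smul, map_neg, ha, hii, hjj, hji, hki, hkj,
    Quaternion.re_mul, Quaternion.imI_mul, Quaternion.imJ_mul, Quaternion.imK_mul]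
  module

theorem smul_mk_zero_right_smul_mk_zero_one {a : M}
    (ha : ∀ n : Fin 4, h.basisMul (.inr n) a = h.basisMul (.inl n) (h.basisMul (.inr 0) a))
    (p : ℍ[ℝ]) : sm (.mk p 0) (sm (.mk 0 1) a) = sm (.mk 0 p) a := by
  have hell : sm (.mk 0 1) a = h.basisMul (.inr 0) a := by
    rw [basisMul, Octo.basis_inr_zero, lmul_apply]
  rw [hell, ← h.lmul_apply, ← h.lmul_apply, lmul_mk_zero_right, lmul_mk_zero_left]
  simp only [LinearMap.add_apply, LinearMap.smul_apply, Module.End.one_apply, ha 1, ha 2, ha 3]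

theorem smul_mk_zero_right_smul_mk_zero_left (x y : ℍ[ℝ]) (m : M) :
    sm (.mk x 0) (sm (.mk 0 y) m) = sm (.mk 0 y) (sm (.mk (star x) 0) m) := by
  have hmul : Octo.mk x 0 * .mk 0 y = .mk 0 y * Octo.conj (.mk x 0) := by
    ext1 <;> simp
  have hconj : Octo.conj (.mk x 0) = .mk (star x) 0 := by
    ext1 <;> simp
  rw [h.smul_smul_of_mul_eq_mul_conj hmul, hconj]

theorem smul_mk_zero_left_smul_mk_zero_one {a : M}
    (hell : ∀ p : ℍ[ℝ], sm (.mk p 0) (sm (.mk 0 1) a) = sm (.mk 0 p) a) (y : ℍ[ℝ]) :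
    sm (.mk 0 y) (sm (.mk 0 1) a) = -sm (.mk y 0) a := by
  have hsum : Octo.mk 0 y * Octo.mk 0 1 + Octo.mk 0 1 * Octo.mk 0 y =
      -(Octo.mk y 0 + Octo.mk (star y) 0) := by
    ext1 <;> simp [add_comm]
  have hell_sq : sm (.mk 0 1) (sm (.mk 0 1) a) = -a := by
    have hsq := h.basisMul_mul_self (x := .inr 0) (by decide)
    rw [basisMul, Octo.basis_inr_zero] at hsq
    exact LinearMap.congr_fun hsq a
  have hleft : sm (.mk 0 1) (sm (.mk 0 y) a) = -sm (.mk (star y) 0) a :=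
    calc sm (.mk 0 1) (sm (.mk 0 y) a) = sm (.mk (star y) 0) (sm (.mk 0 1) (sm (.mk 0 1) a)) := by
          rw [h.smul_mk_zero_right_smul_mk_zero_left, star_star, hell]
      _ = -sm (.mk (star y) 0) a := by rw [hell_sq]; exact map_neg (h.lmul _) a
  have hadd := LinearMap.congr_fun (h.lmul_mul_lmul_add (.mk 0 y) (.mk 0 1)) a
  simp only [LinearMap.add_apply, Module.End.mul_apply, lmul_apply, hleft, hsum, map_neg,
    map_add, LinearMap.neg_apply] at hadd
  linear_combination (norm := module) hadd

theorem mem_assocSet_of_forall_mk {a : M}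
    (hquat : ∀ p q : ℍ[ℝ], sm (.mk p 0) (sm (.mk q 0) a) = sm (.mk (p * q) 0) a)
    (hell : ∀ p : ℍ[ℝ], sm (.mk p 0) (sm (.mk 0 1) a) = sm (.mk 0 p) a) :
    a ∈ assocSet sm := by
  have hswap := h.smul_mk_zero_right_smul_mk_zero_left
  have h_right_left (x w : ℍ[ℝ]) :
      sm (.mk x 0) (sm (.mk 0 w) a) = sm (.mk 0 (w * x)) a := by
    rw [← hell w, hswap, hswap, hquat, ← star_mul, ← hswap, hell]
  have h_left_right (y z : ℍ[ℝ]) :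
      sm (.mk 0 y) (sm (.mk z 0) a) = sm (.mk 0 (y * star z)) a := by
    rw [← h_right_left, hswap, star_star]
  have h_left_left (y w : ℍ[ℝ]) :
      sm (.mk 0 y) (sm (.mk 0 w) a) = sm (-.mk (star w * y) 0) a :=
    calc sm (.mk 0 y) (sm (.mk 0 w) a)
        = sm (.mk (star w) 0) (sm (.mk 0 y) (sm (.mk 0 1) a)) := by
          rw [hswap, star_star, hell]
      _ = sm (.mk (star w) 0) (-sm (.mk y 0) a) := by
          rw [h.smul_mk_zero_left_smul_mk_zero_one hell]
      _ = -sm (.mk (star w * y) 0) a := by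
          rw [← hquat]; exact map_neg (h.lmul _) _
      _ = sm (-.mk (star w * y) 0) a := (LinearMap.congr_fun (map_neg h.lmul _) a).symm
  intro p q
  rw [oLassoc, sub_eq_zero]
  conv_rhs => rw [← Octo.mk_p1_zero_add_mk_zero_p2 p, ← Octo.mk_p1_zero_add_mk_zero_p2 q]
  simp only [h.add_smul, h.smul_add, hquat, h_right_left, h_left_right, h_left_left]
  simp only [← h.add_smul]
  congr 1
  ext1 <;> simp [sub_eq_add_neg, add_comm]

theorem lineEigenspace_one_subset_assocSet : (h.lineEigenspace 1 : Set M) ⊆ assocSet sm := by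
  intro a ha
  have hline (n : Fin 4) := h.lineInv_apply_eq_self_iff.1
    ((mem_signEigenspace.1 ha n).trans (_root_.one_smul ℤˣ a))
  refine h.mem_assocSet_of_forall_mk (h.smul_mk_smul_mk_zero_right (hline 0))
    (h.smul_mk_zero_right_smul_mk_zero_one fun n => ?_)
  fin_cases n
  · exact LinearMap.congr_fun h.basisMul_inl_zero.symm _
  · exact hline 1
  · exact hline 2
  · exact hline 3

theorem lineEigenspace_subset (η : ℤˣ) :
    (h.lineEigenspace η : Set M) ⊆ assocSet sm ∪ conjAssocSet sm := by
  obtain rfl | rfl := Int.units_eq_one_or η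
  · exact fun a ha => .inl (h.lineEigenspace_one_subset_assocSet ha)
  · refine fun a ha => .inr (mem_conjAssocSet_of_mem_assocSet_conj
      (h.conj.lineEigenspace_one_subset_assocSet (mem_signEigenspace.2 fun n => ?_)))
    rw [h.lineInv_conj, LinearMap.neg_apply, mem_signEigenspace.1 ha n, Units.neg_smul, neg_neg]

end IsOMod

/-- Every left 𝕆-module has a basis contained in `𝒜(M) ∪ 𝒜⁻(M)`: an
𝕆-linearly independent subset `S` such that every element of `M` is a finite 𝕆-linear
combination of elements of `S`. -/
theorem stmt15 {M : Type*} [AddCommGroup M] [Module ℝ M]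
    (sm : Octo → M → M) (h : IsOMod sm) :
    ∃ S : Set M, S ⊆ assocSet sm ∪ conjAssocSet sm ∧ OLinIndep sm S ∧
      ∀ m : M, ∃ (n : ℕ) (s : Fin n → M) (r : Fin n → Octo),
        (∀ i, s i ∈ S) ∧ m = ∑ i, sm (r i) (s i) := by
  refine ⟨Set.range h.eigenvectors, ?_, h.oLinIndep_range ?_, h.exists_eq_sum_of_span_eq_top ?_⟩
  · rintro _ ⟨k, rfl⟩
    exact h.lineEigenspace_subset k.1 (Subtype.coe_prop _)
  · exact h.coe_eigenbasis ▸ h.eigenbasis.linearIndependent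
  · exact h.coe_eigenbasis ▸ h.eigenbasis.span_eq
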